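/- arXiv:1110.6140 — 2 statements merged into one kernel-verified Lean document; each statement's English description precedes it below -/
import Mathlib

section
/- Let C ⊆ [0,1] be the middle-thirds Cantor set and let F₀ = {(1−t)·(c,1) + t·(1/2,0) : c ∈ C, t ∈ [0,1]} ⊆ ℝ² be the Cantor fan, the union of the line segments joining each point (c,1), c ∈ C, to the apex (1/2,0). Then F₀ is a dendroid, F₀ is not a dendrite, and the subspace F₀ is contractible. -/
open Set Metric

section TopDefs

variable {α : Type*} [TopologicalSpace α]

/-- `A ⊆ α` is an arc with endpoints `x` and `y`:
a homeomorphic (continuous injective) image of `[0,1]` sending `0 ↦ x`, `1 ↦ y`. -/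
def IsArc (A : Set α) (x y : α) : Prop :=
  ∃ f : Set.Icc (0:ℝ) 1 → α, Continuous f ∧ Function.Injective f ∧
    Set.range f = A ∧ f ⟨0, by norm_num⟩ = x ∧ f ⟨1, by norm_num⟩ = y

/-- A continuum: a nonempty compact connected set. -/
def IsContinuum (X : Set α) : Prop := IsCompact X ∧ IsConnected X

/-- Any two distinct points of `X` are endpoints of an arc contained in `X`. -/
def ArcwiseConnectedSet (X : Set α) : Prop :=
  ∀ x ∈ X, ∀ y ∈ X, x ≠ y → ∃ A, A ⊆ X ∧ IsArc A x y

/-- `X` is unicoherent: for all closed connected `A, B ⊆ X` with `A ∪ B = X`,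
the intersection `A ∩ B` is connected. -/
def UnicoherentSet (X : Set α) : Prop :=
  ∀ A B : Set α, A ⊆ X → B ⊆ X → IsClosed A → IsClosed B →
    IsConnected A → IsConnected B → A ∪ B = X → IsConnected (A ∩ B)

/-- Every subcontinuum of `X` is unicoherent. -/
def HereditarilyUnicoherent (X : Set α) : Prop :=
  ∀ Y, Y ⊆ X → IsContinuum Y → UnicoherentSet Y

/-- A dendroid: an arcwise connected, hereditarily unicoherent continuum. -/
def IsDendroid (X : Set α) : Prop :=
  IsContinuum X ∧ ArcwiseConnectedSet X ∧ HereditarilyUnicoherent X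

/-- The unit circle `S¹`. -/
def unitCircle : Set (EuclideanSpace ℝ (Fin 2)) := Metric.sphere 0 1

/-- A dendrite: a locally connected continuum containing no subset homeomorphic to `S¹`. -/
def IsDendrite (X : Set α) : Prop :=
  IsContinuum X ∧ LocallyConnectedSpace ↥X ∧
    ∀ S : Set α, S ⊆ X → IsEmpty (↥S ≃ₜ ↥unitCircle)

/-- `x` and `y` lie in the same arc-component of `Y`. -/
def SameArcComponent (Y : Set α) (x y : α) : Prop :=
  x = y ∨ ∃ A, A ⊆ Y ∧ IsArc A x y

/-- `x` is a ramification point of `X`: `X \ {x}` has at least three arc-components. -/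
def IsRamificationPoint (X : Set α) (x : α) : Prop :=
  x ∈ X ∧ ∃ u v w, u ∈ X \ {x} ∧ v ∈ X \ {x} ∧ w ∈ X \ {x} ∧
    ¬ SameArcComponent (X \ {x}) u v ∧ ¬ SameArcComponent (X \ {x}) u w ∧
    ¬ SameArcComponent (X \ {x}) v w

/-- A tree (as a continuum): a dendrite with finitely many ramification points. -/
def IsTreeContinuum (X : Set α) : Prop :=
  IsDendrite X ∧ {x | IsRamificationPoint X x}.Finite

end TopDefs

section CompDefs

/-- The rational open ball in `ℝ²` coded by `((q₁, q₂), r)`. -/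
def ballOfCode (c : (ℚ × ℚ) × ℚ) : Set (ℝ × ℝ) :=
  {x | dist x (((c.1.1 : ℝ), (c.1.2 : ℝ)) : ℝ × ℝ) < (c.2 : ℝ)}

/-- A closed set `F ⊆ ℝ²` is `Π⁰₁` if it is the complement of the union of the rational
open balls coded by some c.e. set of codes. -/
def IsPi01Closed (F : Set (ℝ × ℝ)) : Prop :=
  ∃ W : (ℚ × ℚ) × ℚ → Prop, REPred W ∧ F = Set.univ \ ⋃ c ∈ {c | W c}, ballOfCode c

/-- `F ⊆ ℝ²` is c.e. closed if the set of codes of rational open balls meeting `F` is c.e. -/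
def IsCEClosed (F : Set (ℝ × ℝ)) : Prop :=
  REPred (fun c : (ℚ × ℚ) × ℚ => (F ∩ ballOfCode c).Nonempty)

/-- A computable closed subset of `ℝ²`: both `Π⁰₁` and c.e. closed. -/
def IsComputableClosed (F : Set (ℝ × ℝ)) : Prop :=
  IsPi01Closed F ∧ IsCEClosed F

/-- A point of `ℝ²` is computable if the set of codes of rational open balls
containing it is c.e. -/
def IsComputablePoint (x : ℝ × ℝ) : Prop :=
  REPred (fun c : (ℚ × ℚ) × ℚ => x ∈ ballOfCode c)

end CompDefs

section PsiDefs

/-- A tree of binary strings: a set of finite binary strings closed under prefixes. -/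
def IsTreeOfStrings (T : Set (List Bool)) : Prop :=
  ∀ σ ∈ T, ∀ τ : List Bool, τ <+: σ → τ ∈ T

/-- The point `ψ(σ) ∈ ℝ²` associated with the binary string `σ`. -/
noncomputable def psiPt (σ : List Bool) : ℝ × ℝ :=
  ((3:ℝ) ^ (-(σ.length : ℤ)) / 2 +
      2 * ∑ i ∈ Finset.range σ.length,
        (if σ.getD i false then (3:ℝ) ^ (-((i : ℤ) + 1)) else 0),
    (2:ℝ) ^ (-(σ.length : ℤ)))

/-- The planar embedding `Ψ(T)` of a tree `T` of binary strings: the closure of the union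
of the segments from `ψ(σ⁻)` to `ψ(σ)` over nonempty `σ ∈ T` (together with the points
`ψ(σ)`, `σ ∈ T`, which makes no difference except for the degenerate trees `∅`, `{⟨⟩}`). -/
noncomputable def PsiSet (T : Set (List Bool)) : Set (ℝ × ℝ) :=
  closure (psiPt '' T ∪ ⋃ σ ∈ T, ⋃ (_ : σ ≠ []), segment ℝ (psiPt σ.dropLast) (psiPt σ))

end PsiDefs

/-- The middle-thirds Cantor set. -/
def middleThirdsCantorSet : Set ℝ :=
  {x | ∃ a : ℕ → Bool, x = ∑' i : ℕ, 2 * (if a i then (1:ℝ) else 0) * 3 ^ (-((i : ℤ) + 1))}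

/-- The Cantor fan: the union of the segments joining the points `(c, 1)`, `c` in the Cantor
set, to the apex `(1/2, 0)`. -/
def cantorFanSet : Set (ℝ × ℝ) :=
  {p | ∃ c ∈ middleThirdsCantorSet, ∃ t ∈ Set.Icc (0:ℝ) 1,
    p = (1 - t) • ((c, 1) : ℝ × ℝ) + t • ((1/2, 0) : ℝ × ℝ)}

/-!
The fan is the union of the legs `[a, b]`, where `a` is the apex and `b` runs through a compact
totally disconnected base `B`. Splitting `B` into two disjoint compact pieces splits the fan into
two closed subfans which share only the apex. Hence a connected subset of the fan that meets two
legs contains the apex. If a closed connected set `K` skips the point of the leg `[a, b]` at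
parameter `r`, it also skips the points at parameter `r` on the legs over some clopen neighbourhood
`N` of `b` in `B`, and the part of the fan over `N` beyond `r` is then separated from the rest of
`K`. Thus `K` meets every leg in a convex set. The intersection of two such sets is therefore
star-shaped about the apex or contained in a single leg, and it is connected either way.

At an accumulation point `b` of `B`, every neighbourhood of `b` meets other legs, so a connected
one contains the apex, and local connectedness fails. Contractibility is star-shapedness.
-/

open AffineMap Topology

section Arc

variable {X : Type*} [TopologicalSpace X] {A A' : Set X} {x y z : X}

lemma isArc_iff_exists_path :
    IsArc A x y ↔ ∃ γ : Path x y, Function.Injective γ ∧ range γ = A := by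
  constructor
  · rintro ⟨f, hf, hinj, hrange, hx, hy⟩
    exact ⟨⟨⟨f, hf⟩, hx, hy⟩, hinj, hrange⟩
  · rintro ⟨γ, hinj, hrange⟩
    exact ⟨γ, γ.continuous, hinj, hrange, γ.source, γ.target⟩

lemma injective_path_trans {γ : Path x y} {γ' : Path y z}
    (hγ : Function.Injective γ) (hγ' : Function.Injective γ')
    (h : range γ ∩ range γ' ⊆ {y}) : Function.Injective (γ.trans γ') := by
  have first_ne_second : ∀ s t : unitInterval, (s : ℝ) ≤ 1 / 2 → ¬ (t : ℝ) ≤ 1 / 2 →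
      (γ.trans γ') s ≠ (γ.trans γ') t := by
    intro s t hs ht hst
    rw [Path.trans_apply, Path.trans_apply, dif_pos hs, dif_neg ht] at hst
    have hy := (h ⟨⟨_, hst⟩, mem_range_self _⟩).trans γ'.source.symm
    have h0 : 2 * (t : ℝ) - 1 = 0 := congrArg Subtype.val (hγ' hy)
    exact ht (by linarith)
  intro s t hst
  by_cases hs : (s : ℝ) ≤ 1 / 2 <;> by_cases ht : (t : ℝ) ≤ 1 / 2
  · rw [Path.trans_apply, Path.trans_apply, dif_pos hs, dif_pos ht] at hst
    have h2 : 2 * (s : ℝ) = 2 * t := congrArg Subtype.val (hγ hst)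
    exact Subtype.ext (by linarith)
  · exact absurd hst (first_ne_second s t hs ht)
  · exact absurd hst.symm (first_ne_second t s ht hs)
  · rw [Path.trans_apply, Path.trans_apply, dif_neg hs, dif_neg ht] at hst
    have h2 : 2 * (s : ℝ) - 1 = 2 * t - 1 := congrArg Subtype.val (hγ' hst)
    exact Subtype.ext (by linarith)

lemma IsArc.union (hA : IsArc A x y) (hA' : IsArc A' y z) (h : A ∩ A' ⊆ {y}) :
    IsArc (A ∪ A') x z := by
  rw [isArc_iff_exists_path] at *
  obtain ⟨γ, hγ, rfl⟩ := hA
  obtain ⟨γ', hγ', rfl⟩ := hA'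
  exact ⟨γ.trans γ', injective_path_trans hγ hγ' h, γ.trans_range γ'⟩

lemma isArc_segment {E : Type*} [AddCommGroup E] [Module ℝ E] [TopologicalSpace E]
    [IsTopologicalAddGroup E] [ContinuousSMul ℝ E] {x y : E} (hxy : x ≠ y) :
    IsArc (segment ℝ x y) x y := by
  refine ⟨fun t ↦ lineMap x y (t : ℝ), by fun_prop,
    (lineMap_injective ℝ hxy).comp Subtype.val_injective, ?_, by simp, by simp⟩
  rw [segment_eq_image_lineMap, image_eq_range]

end Arc

section Connectedness

variable {X : Type*} [TopologicalSpace X]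

lemma hereditarilyUnicoherent_of_isPreconnected_inter {S : Set X}
    (h : ∀ A B : Set X, A ⊆ S → B ⊆ S → IsClosed A → IsClosed B →
      IsPreconnected A → IsPreconnected B → IsPreconnected (A ∩ B)) :
    HereditarilyUnicoherent S := by
  intro Y hYS hY A B hAY hBY hA hB hAc hBc hAB
  refine ⟨?_, h A B (hAY.trans hYS) (hBY.trans hYS) hA hB hAc.isPreconnected hBc.isPreconnected⟩
  obtain ⟨x, -, hx⟩ := isPreconnected_closed_iff.1 hY.2.isPreconnected A B hA hB hAB.ge
    ((inter_eq_right.2 hAY).symm ▸ hAc.nonempty)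
    ((inter_eq_right.2 hBY).symm ▸ hBc.nonempty)
  exact ⟨x, hx⟩

lemma exists_isCompact_disjoint_union_eq [T2Space X] {B U : Set X} (hB : IsCompact B)
    (hBt : IsTotallyDisconnected B) (hU : IsOpen U) {b : X} (hb : b ∈ B) (hbU : b ∈ U) :
    ∃ N N' : Set X, IsCompact N ∧ IsCompact N' ∧ Disjoint N N' ∧ N ∪ N' = B ∧ b ∈ N ∧ N ⊆ U := by
  have : CompactSpace B := isCompact_iff_compactSpace.1 hB
  have : TotallyDisconnectedSpace B := totallyDisconnectedSpace_subtype_iff.2 hBt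
  obtain ⟨V, hV, hbV, hVU⟩ := compact_exists_isClopen_in_isOpen (x := ⟨b, hb⟩)
    (hU.preimage (continuous_subtype_val : Continuous ((↑) : B → X))) hbU
  refine ⟨(↑) '' V, (↑) '' Vᶜ, hV.isClosed.isCompact.image continuous_subtype_val,
    hV.compl.isClosed.isCompact.image continuous_subtype_val,
    (disjoint_image_iff Subtype.val_injective).2 disjoint_compl_right, ?_,
    mem_image_of_mem _ hbV, image_subset_iff.2 hVU⟩
  rw [← image_union, union_compl_self, image_univ, Subtype.range_coe]

lemma isTotallyDisconnected_prod_singleton {Y : Type*} [TopologicalSpace Y] {S : Set X}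
    (hS : IsTotallyDisconnected S) (y : Y) : IsTotallyDisconnected (S ×ˢ {y}) := by
  rw [prod_singleton]
  exact (isEmbedding_prodMkLeft y).isTotallyDisconnected_image.2 hS

end Connectedness

section Fan

variable {E : Type*} [AddCommGroup E] [Module ℝ E]

/-- The *legs* `[a, b]`, `b ∈ B`, of the fan `convexJoin ℝ {a} B` with apex `a` over the base `B`
pairwise meet only at `a`, so that they are indexed by `B` away from the apex. -/
def HasDisjointLegs (a : E) (B : Set E) : Prop :=
  B.Pairwise fun b c ↦ segment ℝ a b ∩ segment ℝ a c ⊆ {a}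

variable {a b c : E} {B K L N : Set E}

lemma mem_convexJoin_singleton_left {x : E} :
    x ∈ convexJoin ℝ {a} B ↔ ∃ b ∈ B, x ∈ segment ℝ a b := by
  simp only [mem_convexJoin, mem_singleton_iff, exists_eq_left]

lemma starConvex_convexJoin_singleton (a : E) (B : Set E) :
    StarConvex ℝ a (convexJoin ℝ {a} B) := by
  rw [convexJoin_singleton_left]
  exact starConvex_iUnion₂ fun b _ ↦ (convex_segment a b).starConvex (left_mem_segment ℝ a b)

lemma convexJoin_singleton_eq_image2_lineMap (a : E) (B : Set E) :
    convexJoin ℝ {a} B = image2 (fun b t ↦ lineMap a b t) B (Icc (0 : ℝ) 1) := by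
  simp_rw [convexJoin_singleton_left, segment_eq_image_lineMap, iUnion_image_left]

lemma HasDisjointLegs.eq_and_eq_of_lineMap_eq (hleg : HasDisjointLegs a B) (ha : a ∉ B)
    (hb : b ∈ B) (hc : c ∈ B) {s t : ℝ} (hs : s ∈ Ioc (0 : ℝ) 1) (ht : t ∈ Icc (0 : ℝ) 1)
    (h : lineMap a b s = lineMap a c t) : b = c ∧ s = t := by
  have hab : a ≠ b := fun e ↦ ha (e ▸ hb)
  have hbc : b = c := by
    by_contra hne
    have hmem : lineMap a b s = a := hleg hb hc hne
      ⟨lineMap_mem_segment ℝ a b (Ioc_subset_Icc_self hs), h ▸ lineMap_mem_segment ℝ a c ht⟩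
    exact (lineMap_eq_left_iff.1 hmem).elim hab hs.1.ne'
  subst hbc
  exact ⟨rfl, lineMap_injective ℝ hab h⟩

lemma hasDisjointLegs_prod_singleton (x : E) (S : Set E) :
    HasDisjointLegs ((x, 0) : E × ℝ) (S ×ˢ {1}) := by
  rintro ⟨c, h⟩ ⟨-, rfl⟩ ⟨d, h'⟩ ⟨-, rfl⟩ hne
  refine segment_inter_subset_endpoint_of_linearIndependent_sub ℝ
    (LinearIndependent.pair_iff.2 fun s t hst ↦ ?_)
  have hcd : c - d ≠ 0 := sub_ne_zero.2 fun e ↦ hne (by rw [e])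
  obtain ⟨hfst, hsnd⟩ := Prod.ext_iff.1 hst
  have hts : t = -s := by
    simp only [Prod.mk_sub_mk, Prod.smul_mk, Prod.mk_add_mk, smul_eq_mul, Prod.snd_zero] at hsnd
    linarith
  have hs : s • (c - d) = 0 := by
    rw [← Prod.fst_zero (M := E) (N := ℝ), ← hfst, hts]
    simp only [Prod.mk_sub_mk, Prod.smul_mk, Prod.mk_add_mk]
    module
  have hs0 : s = 0 := (smul_eq_zero.1 hs).resolve_right hcd
  exact ⟨hs0, by rw [hts, hs0, neg_zero]⟩

variable [TopologicalSpace E] [IsTopologicalAddGroup E] [ContinuousSMul ℝ E]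

lemma isCompact_image2_lineMap {I : Set ℝ} (hN : IsCompact N) (hI : IsCompact I) (a : E) :
    IsCompact (image2 (fun b t ↦ lineMap a b t) N I) := by
  rw [← image_uncurry_prod]
  exact (hN.prod hI).image (by fun_prop)

lemma isCompact_convexJoin_singleton (hB : IsCompact B) (a : E) :
    IsCompact (convexJoin ℝ {a} B) := by
  rw [convexJoin_singleton_eq_image2_lineMap]
  exact isCompact_image2_lineMap hB isCompact_Icc a

lemma HasDisjointLegs.arcwiseConnectedSet_convexJoin (hleg : HasDisjointLegs a B) :
    ArcwiseConnectedSet (convexJoin ℝ {a} B) := by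
  intro x hx y hy hxy
  obtain ⟨b, hb, hxb⟩ := mem_convexJoin_singleton_left.1 hx
  obtain ⟨c, hc, hyc⟩ := mem_convexJoin_singleton_left.1 hy
  by_cases hcommon : ∃ d ∈ B, x ∈ segment ℝ a d ∧ y ∈ segment ℝ a d
  · obtain ⟨d, hd, hxd, hyd⟩ := hcommon
    exact ⟨segment ℝ x y, ((convex_segment a d).segment_subset hxd hyd).trans
      (segment_subset_convexJoin rfl hd), isArc_segment hxy⟩
  have hbc : b ≠ c := fun e ↦ hcommon ⟨c, hc, e ▸ hxb, hyc⟩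
  have hxa : x ≠ a := fun e ↦ hcommon ⟨c, hc, e ▸ left_mem_segment ℝ a c, hyc⟩
  have hya : a ≠ y := fun e ↦ hcommon ⟨b, hb, hxb, e ▸ left_mem_segment ℝ a b⟩
  have hstar := starConvex_convexJoin_singleton a B
  refine ⟨segment ℝ x a ∪ segment ℝ a y,
    union_subset (segment_symm ℝ a x ▸ hstar.segment_subset hx) (hstar.segment_subset hy),
    (isArc_segment hxa).union (isArc_segment hya) ?_⟩
  rw [segment_symm ℝ x a]
  exact (inter_subset_inter
    ((convex_segment a b).segment_subset (left_mem_segment ℝ a b) hxb)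
    ((convex_segment a c).segment_subset (left_mem_segment ℝ a c) hyc)).trans (hleg hb hc hbc)

variable [T2Space E]

lemma HasDisjointLegs.apex_mem_of_isPreconnected (hleg : HasDisjointLegs a B) (hB : IsCompact B)
    (hBt : IsTotallyDisconnected B) (hKF : K ⊆ convexJoin ℝ {a} B) (hK : IsPreconnected K)
    (hb : b ∈ B) (hc : c ∈ B) (hbc : b ≠ c) (hKb : (K ∩ segment ℝ a b).Nonempty)
    (hKc : (K ∩ segment ℝ a c).Nonempty) : a ∈ K := by
  obtain ⟨N, N', hN, hN', hdisj, rfl, hbN, hNc⟩ :=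
    exists_isCompact_disjoint_union_eq hB hBt isOpen_compl_singleton hb hbc
  have hcN' : c ∈ N' := hc.resolve_left fun h ↦ hNc h rfl
  rw [convexJoin_union_right] at hKF
  obtain ⟨z, hzK, hzN, hzN'⟩ := isPreconnected_closed_iff.1 hK _ _
    (isCompact_convexJoin_singleton hN a).isClosed (isCompact_convexJoin_singleton hN' a).isClosed
    hKF (hKb.mono (inter_subset_inter_right K (segment_subset_convexJoin rfl hbN)))
    (hKc.mono (inter_subset_inter_right K (segment_subset_convexJoin rfl hcN')))
  obtain ⟨d, hd, hzd⟩ := mem_convexJoin_singleton_left.1 hzN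
  obtain ⟨d', hd', hzd'⟩ := mem_convexJoin_singleton_left.1 hzN'
  have hza : z = a := hleg (.inl hd) (.inr hd') (hdisj.ne_of_mem hd hd') ⟨hzd, hzd'⟩
  exact hza ▸ hzK

lemma HasDisjointLegs.ordConnected_preimage_lineMap (hleg : HasDisjointLegs a B) (ha : a ∉ B)
    (hB : IsCompact B) (hBt : IsTotallyDisconnected B) (hKF : K ⊆ convexJoin ℝ {a} B)
    (hKcl : IsClosed K) (hK : IsPreconnected K) (hb : b ∈ B) :
    OrdConnected (Icc (0 : ℝ) 1 ∩ lineMap a b ⁻¹' K) := by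
  refine ⟨fun s ⟨hs, hsK⟩ u ⟨hu, huK⟩ r ⟨hsr, hru⟩ ↦ ⟨⟨hs.1.trans hsr, hru.trans hu.2⟩, ?_⟩⟩
  by_contra hrK
  have hr1 : r ≤ 1 := hru.trans hu.2
  have hr : 0 < r := hs.1.trans_lt (hsr.lt_of_ne fun e ↦ hrK (e ▸ hsK))
  have hopen : IsOpen {d | lineMap a d r ∉ K} := hKcl.isOpen_compl.preimage (by fun_prop)
  obtain ⟨N, N', hN, hN', hdisj, rfl, hbN, hNr⟩ :=
    exists_isCompact_disjoint_union_eq hB hBt hopen hb hrK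
  rw [convexJoin_union_right, convexJoin_singleton_eq_image2_lineMap a N,
    ← Icc_union_Icc_eq_Icc hr.le hr1, image2_union_right, union_right_comm] at hKF
  obtain ⟨z, hzK, hz, ⟨d, hd, t, ht, rfl⟩⟩ := isPreconnected_closed_iff.1 hK _ _
    ((isCompact_image2_lineMap hN isCompact_Icc a).union
      (isCompact_convexJoin_singleton hN' a)).isClosed
    (isCompact_image2_lineMap hN isCompact_Icc a).isClosed hKF
    ⟨_, hsK, .inl ⟨b, hbN, s, ⟨hs.1, hsr⟩, rfl⟩⟩ ⟨_, huK, b, hbN, u, ⟨hru, hu.2⟩, rfl⟩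
  have ht0 : t ∈ Ioc 0 1 := ⟨hr.trans_le ht.1, ht.2⟩
  rw [convexJoin_singleton_eq_image2_lineMap] at hz
  rcases hz with ⟨d', hd', t', ht', hz⟩ | ⟨d', hd', t', ht', hz⟩
  · obtain ⟨-, rfl⟩ := hleg.eq_and_eq_of_lineMap_eq ha (.inl hd) (.inl hd') ht0
      ⟨ht'.1, ht'.2.trans hr1⟩ hz.symm
    exact hNr hd (ht'.2.antisymm ht.1 ▸ hzK)
  · obtain ⟨rfl, -⟩ := hleg.eq_and_eq_of_lineMap_eq ha (.inl hd) (.inr hd') ht0 ht' hz.symm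
    exact hdisj.notMem_of_mem_left hd hd'

lemma HasDisjointLegs.convex_inter_segment (hleg : HasDisjointLegs a B) (ha : a ∉ B)
    (hB : IsCompact B) (hBt : IsTotallyDisconnected B) (hKF : K ⊆ convexJoin ℝ {a} B)
    (hKcl : IsClosed K) (hK : IsPreconnected K) (hb : b ∈ B) :
    Convex ℝ (K ∩ segment ℝ a b) := by
  rw [segment_eq_image_lineMap, inter_comm, ← image_inter_preimage]
  exact (hleg.ordConnected_preimage_lineMap ha hB hBt hKF hKcl hK hb).convex.affine_image _

lemma HasDisjointLegs.isPreconnected_inter (hleg : HasDisjointLegs a B) (ha : a ∉ B)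
    (hB : IsCompact B) (hBt : IsTotallyDisconnected B) (hKF : K ⊆ convexJoin ℝ {a} B)
    (hLF : L ⊆ convexJoin ℝ {a} B) (hKcl : IsClosed K) (hLcl : IsClosed L)
    (hK : IsPreconnected K) (hL : IsPreconnected L) : IsPreconnected (K ∩ L) := by
  have hconv : ∀ b ∈ B, Convex ℝ (K ∩ L ∩ segment ℝ a b) := fun b hb ↦ by
    rw [inter_inter_distrib_right]
    exact (hleg.convex_inter_segment ha hB hBt hKF hKcl hK hb).inter
      (hleg.convex_inter_segment ha hB hBt hLF hLcl hL hb)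
  by_cases haKL : a ∈ K ∩ L
  · refine (StarConvex.isPathConnected (starConvex_iff_segment_subset.2 fun x hx ↦ ?_)
      haKL).isConnected.isPreconnected
    obtain ⟨b, hb, hxb⟩ := mem_convexJoin_singleton_left.1 (hKF hx.1)
    exact ((hconv b hb).segment_subset ⟨haKL, left_mem_segment ℝ a b⟩ ⟨hx, hxb⟩).trans
      inter_subset_left
  · obtain hempty | ⟨x, hx⟩ := (K ∩ L).eq_empty_or_nonempty
    · exact hempty ▸ isPreconnected_empty
    obtain ⟨b, hb, hxb⟩ := mem_convexJoin_singleton_left.1 (hKF hx.1)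
    have hsub : K ∩ L ⊆ segment ℝ a b := by
      intro y hy
      obtain ⟨c, hc, hyc⟩ := mem_convexJoin_singleton_left.1 (hKF hy.1)
      by_contra hyb
      have hbc : b ≠ c := fun e ↦ hyb (e ▸ hyc)
      exact haKL
        ⟨hleg.apex_mem_of_isPreconnected hB hBt hKF hK hb hc hbc ⟨x, hx.1, hxb⟩ ⟨y, hy.1, hyc⟩,
          hleg.apex_mem_of_isPreconnected hB hBt hLF hL hb hc hbc ⟨x, hx.2, hxb⟩ ⟨y, hy.2, hyc⟩⟩
    exact inter_eq_left.2 hsub ▸ (hconv b hb).isPreconnected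

lemma HasDisjointLegs.isDendroid_convexJoin (hleg : HasDisjointLegs a B) (ha : a ∉ B)
    (hB : IsCompact B) (hBt : IsTotallyDisconnected B) (hne : B.Nonempty) :
    IsDendroid (convexJoin ℝ {a} B) :=
  ⟨⟨isCompact_convexJoin_singleton hB a, ((starConvex_convexJoin_singleton a B).isPathConnected
      (subset_convexJoin_left hne rfl)).isConnected⟩,
    hleg.arcwiseConnectedSet_convexJoin,
    hereditarilyUnicoherent_of_isPreconnected_inter fun _ _ hKF hLF hKcl hLcl hK hL ↦
      hleg.isPreconnected_inter ha hB hBt hKF hLF hKcl hLcl hK hL⟩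

lemma HasDisjointLegs.not_locallyConnectedSpace_convexJoin (hleg : HasDisjointLegs a B)
    (ha : a ∉ B) (hB : IsCompact B) (hBt : IsTotallyDisconnected B) (hinf : B.Infinite) :
    ¬ LocallyConnectedSpace (convexJoin ℝ {a} B) := by
  intro hlc
  obtain ⟨b, hb, hacc⟩ := hinf.exists_accPt_of_subset_isCompact hB Subset.rfl
  have hBF : B ⊆ convexJoin ℝ {a} B := subset_convexJoin_right (singleton_nonempty a)
  obtain ⟨V, hVa, hVopen, hbV, hV⟩ := locallyConnectedSpace_iff_subsets_isOpen_isConnected.1 hlc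
    ⟨b, hBF hb⟩ {x | (x : E) ≠ a}
    ((isOpen_ne.preimage continuous_subtype_val).mem_nhds fun e ↦ ha (e ▸ hb))
  obtain ⟨W, hW, rfl⟩ := isOpen_induced_iff.1 hVopen
  obtain ⟨c, ⟨hcW, hc⟩, hcb⟩ := accPt_iff_nhds.1 hacc W (hW.mem_nhds hbV)
  have hVconn := hV.isPreconnected.image _ continuous_subtype_val.continuousOn
  rw [Subtype.image_preimage_coe] at hVconn
  have haW := hleg.apex_mem_of_isPreconnected hB hBt inter_subset_left hVconn hb hc hcb.symm
    ⟨b, ⟨hBF hb, hbV⟩, right_mem_segment ℝ a b⟩ ⟨c, ⟨hBF hc, hcW⟩, right_mem_segment ℝ a c⟩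
  exact hVa (a := ⟨a, haW.1⟩) haW.2 rfl

theorem cantorFan_dendroid_not_dendrite_contractible_general (hleg : HasDisjointLegs a B)
    (ha : a ∉ B) (hB : IsCompact B) (hBt : IsTotallyDisconnected B) (hinf : B.Infinite) :
    IsDendroid (convexJoin ℝ {a} B) ∧ ¬ IsDendrite (convexJoin ℝ {a} B) ∧
      ContractibleSpace (convexJoin ℝ {a} B) :=
  ⟨hleg.isDendroid_convexJoin ha hB hBt hinf.nonempty,
    fun h ↦ hleg.not_locallyConnectedSpace_convexJoin ha hB hBt hinf h.2.1,
    (starConvex_convexJoin_singleton a B).contractibleSpace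
      ⟨a, subset_convexJoin_left hinf.nonempty rfl⟩⟩

end Fan

section Cantor

lemma middleThirdsCantorSet_eq_cantorSet : middleThirdsCantorSet = cantorSet := by
  have hterm (d : ℕ → Bool) : Real.ofDigits (fun i ↦ cond (d i) (2 : Fin 3) 0) =
      ∑' i : ℕ, 2 * (if d i then (1 : ℝ) else 0) * 3 ^ (-((i : ℤ) + 1)) := by
    refine tsum_congr fun i ↦ ?_
    rw [zpow_neg, Real.ofDigitsTerm]
    cases d i <;> simp [zpow_add_one₀, pow_succ]
  ext x
  constructor
  · rintro ⟨d, rfl⟩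
    exact hterm d ▸ ofDigits_bool_to_fin_three_mem_cantorSet d
  · intro hx
    exact ⟨cantorToBinary x, (ofDigits_cantorToTernary hx).symm.trans (hterm _)⟩

lemma isTotallyDisconnected_cantorSet : IsTotallyDisconnected cantorSet := by
  have hrange := (IsEmbedding.subtypeVal.comp
    cantorSetHomeomorphNatToBool.symm.isEmbedding).isTotallyDisconnected_range.2 inferInstance
  rwa [cantorSetHomeomorphNatToBool.symm.surjective.range_comp, Subtype.range_coe] at hrange

lemma infinite_cantorSet : cantorSet.Infinite :=
  infinite_coe_iff.1 (cantorSetEquivNatToBool.infinite_iff.2 inferInstance)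

lemma cantorFanSet_eq_convexJoin :
    cantorFanSet = convexJoin ℝ {(1 / 2, 0)} (cantorSet ×ˢ {1}) := by
  ext p
  simp only [cantorFanSet, middleThirdsCantorSet_eq_cantorSet, mem_convexJoin_singleton_left,
    segment_symm ℝ ((1 / 2, 0) : ℝ × ℝ), segment_eq_image, mem_image, mem_ofPred_eq, prod_singleton,
    exists_exists_and_eq_and]
  simp [eq_comm]

end Cantor

theorem cantorFan_dendroid_not_dendrite_contractible :
    IsDendroid cantorFanSet ∧ ¬ IsDendrite cantorFanSet ∧ ContractibleSpace ↥cantorFanSet := by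
  rw [cantorFanSet_eq_convexJoin]
  exact cantorFan_dendroid_not_dendrite_contractible_general (hasDisjointLegs_prod_singleton _ _)
    (by simp) (isCompact_cantorSet.prod isCompact_singleton)
    (isTotallyDisconnected_prod_singleton isTotallyDisconnected_cantorSet 1)
    (infinite_cantorSet.prod_left (singleton_nonempty 1))
end

section
/- For every nonempty tree of binary strings T ⊆ 2^{<ℕ} (possibly infinite), the set Ψ(T) ⊆ ℝ² is a dendrite. -/
open Set Metric

/-!
Prefixing a digit to strings corresponds to an affine `1/2`-contraction of the plane, so the union
of the edges of `Ψ(T)` consists of the root, at most two edges at the root, and contracted copies of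
the same union for the two subtrees.

Iterating this decomposition covers the union of the edges, and hence its closure `Ψ(T)`, by
finitely many connected sets of arbitrarily small diameter (Sierpiński's property S), which gives
local connectedness.

A circle has no cut point, so inside a union of two closed sets that meet in at most one point it
lies in one of them. The full set `Ψ(2^{<ℕ})` is such a union of two branches, and each branch is
such a union of an edge and a contracted copy of `Ψ(2^{<ℕ})`. An edge contains no nondegenerate set
without cut points, so a circle in `Ψ(2^{<ℕ})` can be pushed into ever smaller copies and would have
diameter zero.
-/

open Topology
open scoped ENNReal NNReal

section CutPoints

variable {α β : Type*} [TopologicalSpace α] [TopologicalSpace β] {S A B : Set α}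

/-- A preconnected set none of whose points is a cut point. A circle is one; a dendrite contains
only degenerate ones. -/
def HasNoCutPoint (S : Set α) : Prop :=
  IsPreconnected S ∧ ∀ p ∈ S, IsPreconnected (S \ {p})

theorem hasNoCutPoint_image_iff {f : α → β} (hf : IsEmbedding f) :
    HasNoCutPoint (f '' S) ↔ HasNoCutPoint S := by
  simp only [HasNoCutPoint, forall_mem_image, ← image_singleton, ← image_sdiff hf.injective,
    hf.isInducing.isPreconnected_image]

namespace HasNoCutPoint

theorem subset_or_subset (hS : HasNoCutPoint S) (hA : IsClosed A) (hB : IsClosed B)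
    (hAB : (S ∩ (A ∩ B)).Subsingleton) (hcover : S ⊆ A ∪ B) : S ⊆ A ∨ S ⊆ B := by
  rcases hAB.eq_empty_or_singleton with hempty | ⟨p, hp⟩
  · exact isPreconnected_iff_subset_of_disjoint_closed.1 hS.1 A B hA hB hcover hempty
  · obtain ⟨hpS, hpA, hpB⟩ : p ∈ S ∩ (A ∩ B) := hp ▸ mem_singleton p
    have hdisj : S \ {p} ∩ (A ∩ B) = ∅ := by
      rw [inter_comm, ← inter_sdiff_assoc, inter_comm, hp, sdiff_self]
    refine (isPreconnected_iff_subset_of_disjoint_closed.1 (hS.2 p hpS) A B hA hB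
      (sdiff_subset.trans hcover) hdisj).imp ?_ ?_ <;>
    · rw [sdiff_singleton_subset_iff]
      exact fun h => h.trans (insert_subset ‹_› Subset.rfl)

theorem subsingleton_of_injOn [LinearOrder β] [OrderClosedTopology β] [DenselyOrdered β]
    (hS : HasNoCutPoint S) {f : α → β} (hf : Continuous f) (hinj : InjOn f S) :
    S.Subsingleton := by
  intro x hx y hy
  by_contra hxy
  wlog hlt : f x < f y generalizing x y
  · exact this hy hx (Ne.symm hxy) ((hinj.ne hx hy hxy).lt_or_gt.resolve_left hlt)
  obtain ⟨c, hxc, hcy⟩ := exists_between hlt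
  have hinter : (S ∩ (f ⁻¹' Iic c ∩ f ⁻¹' Ici c)).Subsingleton :=
    fun u ⟨hu, huc, hcu⟩ v ⟨hv, hvc, hcv⟩ =>
      hinj hu hv ((le_antisymm huc hcu).trans (le_antisymm hvc hcv).symm)
  rcases hS.subset_or_subset (isClosed_Iic.preimage hf) (isClosed_Ici.preimage hf) hinter
    fun z _ => le_total (f z) c with hle | hge
  · exact (hle hy).not_gt hcy
  · exact (hge hx).not_gt hxc

end HasNoCutPoint

theorem isPreconnected_compl_singleton_sphere {E : Type*} [NormedAddCommGroup E]
    [InnerProductSpace ℝ E] (v : sphere (0 : E) 1) : IsPreconnected {v}ᶜ := by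
  have hv : ‖(v : E)‖ = 1 := norm_eq_of_mem_sphere v
  rw [← stereographic_source hv, ← (stereographic hv).symm_image_target_eq_source,
    stereographic_target]
  exact isPreconnected_univ.image _
    (stereographic_target hv ▸ (stereographic hv).continuousOn_symm)

theorem hasNoCutPoint_univ_sphere {E : Type*} [NormedAddCommGroup E] [InnerProductSpace ℝ E]
    (hE : 1 < Module.rank ℝ E) : HasNoCutPoint (univ : Set (sphere (0 : E) 1)) := by
  have : PreconnectedSpace (sphere (0 : E) 1) :=
    isPreconnected_iff_preconnectedSpace.1 (isPreconnected_sphere hE 0 1)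
  refine ⟨isPreconnected_univ, fun v _ => ?_⟩
  rw [← compl_eq_univ_sdiff]
  exact isPreconnected_compl_singleton_sphere v

theorem isEmpty_homeomorph_sphere_of_subsingleton {E : Type*} [NormedAddCommGroup E]
    [InnerProductSpace ℝ E] (hE : 1 < Module.rank ℝ E) (hS : HasNoCutPoint S → S.Subsingleton) :
    IsEmpty (S ≃ₜ sphere (0 : E) 1) := by
  refine ⟨fun e => ?_⟩
  have hembed : IsEmbedding (Subtype.val ∘ e.symm) :=
    IsEmbedding.subtypeVal.comp e.symm.isEmbedding
  have hrange : Subtype.val ∘ e.symm '' univ = S := by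
    rw [image_univ, EquivLike.range_comp, Subtype.range_coe]
  have : Subsingleton S := by
    refine (hS ?_).coe_sort
    rw [← hrange, hasNoCutPoint_image_iff hembed]
    exact hasNoCutPoint_univ_sphere hE
  have : Nontrivial E := (rank_pos_iff_nontrivial (R := ℝ)).1 (zero_lt_one.trans hE)
  obtain ⟨v, hv⟩ : (sphere (0 : E) 1).Nonempty := NormedSpace.sphere_nonempty.2 zero_le_one
  exact ne_neg_of_mem_unit_sphere ℝ ⟨v, hv⟩ (e.symm.injective (Subsingleton.elim _ _))

end CutPoints

section PropertyS

variable {α β : Type*}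

/-- The instance at scale `ε` of Sierpiński's property S: the set `X` is a finite union of
preconnected sets of diameter at most `ε`. The pieces need not be closed. -/
def HasFiniteConnectedCover [PseudoEMetricSpace α] (ε : ℝ≥0∞) (X : Set α) : Prop :=
  ∃ F : Set (Set α), F.Finite ∧ ⋃₀ F = X ∧ ∀ A ∈ F, IsPreconnected A ∧ ediam A ≤ ε

namespace HasFiniteConnectedCover

variable [PseudoEMetricSpace α] [PseudoEMetricSpace β] {ε : ℝ≥0∞} {X Y : Set α}

theorem of_isPreconnected (hX : IsPreconnected X) (hε : ediam X ≤ ε) :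
    HasFiniteConnectedCover ε X :=
  ⟨{X}, finite_singleton X, sUnion_singleton X, by rintro _ rfl; exact ⟨hX, hε⟩⟩

theorem mono {δ : ℝ≥0∞} (hX : HasFiniteConnectedCover ε X) (hεδ : ε ≤ δ) :
    HasFiniteConnectedCover δ X :=
  let ⟨F, hF, hFX, hsmall⟩ := hX
  ⟨F, hF, hFX, fun A hA => ⟨(hsmall A hA).1, (hsmall A hA).2.trans hεδ⟩⟩

theorem iUnion {ι : Sort*} [Finite ι] {X : ι → Set α}
    (hX : ∀ i, HasFiniteConnectedCover ε (X i)) : HasFiniteConnectedCover ε (⋃ i, X i) := by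
  choose F hF hFX hsmall using hX
  refine ⟨⋃ i, F i, finite_iUnion hF, ?_, fun A hA => ?_⟩
  · rw [sUnion_iUnion, iUnion_congr hFX]
  · obtain ⟨i, hi⟩ := mem_iUnion.1 hA
    exact hsmall i A hi

theorem union (hX : HasFiniteConnectedCover ε X) (hY : HasFiniteConnectedCover ε Y) :
    HasFiniteConnectedCover ε (X ∪ Y) := by
  rw [union_eq_iUnion]
  exact iUnion (Bool.forall_bool.2 ⟨hY, hX⟩)

theorem image_lipschitz {K : ℝ≥0} {f : α → β} (hf : LipschitzWith K f)
    (hX : HasFiniteConnectedCover ε X) : HasFiniteConnectedCover (K * ε) (f '' X) := by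
  obtain ⟨F, hF, rfl, hsmall⟩ := hX
  refine ⟨image f '' F, hF.image _, (image_sUnion ..).symm, forall_mem_image.2 fun A hA => ?_⟩
  obtain ⟨hconn, hdiam⟩ := hsmall A hA
  exact ⟨hconn.image f hf.continuous.continuousOn, (hf.ediam_image_le A).trans (by gcongr)⟩

theorem closure (hX : HasFiniteConnectedCover ε X) :
    HasFiniteConnectedCover ε (closure X) := by
  obtain ⟨F, hF, rfl, hsmall⟩ := hX
  refine ⟨_root_.closure '' F, hF.image _, ?_, forall_mem_image.2 fun A hA => ?_⟩
  · rw [hF.closure_sUnion, sUnion_image]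
  · exact ⟨(hsmall A hA).1.closure, (ediam_closure A).trans_le (hsmall A hA).2⟩

theorem univ_subtype (hX : HasFiniteConnectedCover ε X) :
    HasFiniteConnectedCover ε (univ : Set X) := by
  obtain ⟨F, hF, hFX, hsmall⟩ := hX
  refine ⟨preimage Subtype.val '' F, hF.image _, ?_, forall_mem_image.2 fun A hA => ?_⟩
  · rw [sUnion_image, ← preimage_iUnion₂, ← sUnion_eq_biUnion, hFX, Subtype.coe_preimage_self]
  · have himage : Subtype.val '' (Subtype.val ⁻¹' A : Set X) = A := by
      rw [Subtype.image_preimage_coe, inter_eq_right, ← hFX]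
      exact subset_sUnion_of_mem hA
    rw [← IsInducing.subtypeVal.isPreconnected_image, ← isometry_subtype_coe.ediam_image, himage]
    exact hsmall A hA

end HasFiniteConnectedCover

theorem hasFiniteConnectedCover_of_convex [SeminormedAddCommGroup α] [NormedSpace ℝ α] {X : Set α}
    (hX : Convex ℝ X) (hbdd : TotallyBounded X) {ε : ℝ≥0∞} (hε : 0 < ε) :
    HasFiniteConnectedCover ε X := by
  obtain ⟨r, hr, hrε⟩ := ENNReal.lt_iff_exists_nnreal_btwn.1 (ENNReal.half_pos hε.ne')
  obtain ⟨t, ht, hcover⟩ := EMetric.totallyBounded_iff.1 hbdd r hr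
  refine ⟨(fun c => eball c r ∩ X) '' t, ht.image _, ?_, forall_mem_image.2 fun c _ => ⟨?_, ?_⟩⟩
  · rw [sUnion_image, ← iUnion₂_inter, inter_eq_right]
    exact hcover
  · rw [eball_coe]
    exact ((convex_ball c r).inter hX).isPreconnected
  · calc ediam (eball c r ∩ X) ≤ ediam (eball c r) := ediam_mono inter_subset_left
      _ ≤ 2 * r := ediam_eball_le
      _ ≤ 2 * (ε / 2) := by gcongr
      _ = ε := ENNReal.mul_div_cancel two_ne_zero ENNReal.ofNat_ne_top

theorem locallyConnectedSpace_of_hasFiniteConnectedCover_univ [PseudoEMetricSpace α]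
    (h : ∀ ε > 0, HasFiniteConnectedCover ε (univ : Set α)) : LocallyConnectedSpace α := by
  rw [locallyConnectedSpace_iff_connected_subsets]
  intro x U hU
  obtain ⟨ε, hε, hball⟩ := EMetric.mem_nhds_iff.1 hU
  obtain ⟨δ, hδ, hδε⟩ := exists_between hε
  obtain ⟨F, hF, hFuniv, hsmall⟩ := h δ hδ
  have hnear : ∀ᶠ y in 𝓝 x, ∀ A ∈ F, y ∈ A → x ∈ closure A := by
    refine (Filter.eventually_all_finite hF).2 fun A _ => ?_
    by_cases hxA : x ∈ closure A
    · exact .of_forall fun _ _ => hxA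
    · filter_upwards [isClosed_closure.isOpen_compl.mem_nhds hxA] with y hy hyA
      exact absurd (subset_closure hyA) hy
  -- The closures of the pieces that accumulate at `x` form a small connected neighbourhood of `x`.
  refine ⟨⋃₀ (closure '' {A ∈ F | x ∈ closure A}), ?_, ?_, ?_⟩
  · filter_upwards [hnear] with y hy
    obtain ⟨A, hA, hyA⟩ : y ∈ ⋃₀ F := hFuniv ▸ mem_univ y
    exact mem_sUnion_of_mem (subset_closure hyA) (mem_image_of_mem _ ⟨hA, hy A hA hyA⟩)
  · exact isPreconnected_sUnion x _ (forall_mem_image.2 fun A hA => hA.2)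
      (forall_mem_image.2 fun A hA => (hsmall A hA.1).1.closure)
  · refine sUnion_subset (forall_mem_image.2 fun A hA y hy => hball ?_)
    calc edist y x ≤ ediam (closure A) := edist_le_ediam_of_mem hy hA.2
      _ = ediam A := ediam_closure A
      _ ≤ δ := (hsmall A hA.1).2
      _ < ε := hδε

end PropertyS

section Embedding

variable {T : Set (List Bool)} {b : Bool} {z : ℝ × ℝ}

/-- The strings `τ` with `b :: τ ∈ T`. For a tree `T`, this is the tree above its node `[b]`. -/
def subtreeAt (b : Bool) (T : Set (List Bool)) : Set (List Bool) :=
  {τ | b :: τ ∈ T}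

theorem IsTreeOfStrings.subtreeAt (hT : IsTreeOfStrings T) (b : Bool) :
    IsTreeOfStrings (subtreeAt b T) :=
  fun _ hσ _ hτ => hT _ hσ _ ((List.prefix_cons_inj b).2 hτ)

theorem IsTreeOfStrings.nil_mem (hT : IsTreeOfStrings T) (hne : T.Nonempty) : [] ∈ T :=
  hT _ hne.some_mem [] List.nil_prefix

/-- The affine contraction of the plane that corresponds to prefixing `b` to strings. Its fixed
point is `(b, 0)`. -/
noncomputable def psiMap (b : Bool) : ℝ × ℝ →ᵃ[ℝ] ℝ × ℝ :=
  (AffineMap.homothety (if b then 1 else 0) (1 / 3 : ℝ)).prodMap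
    (AffineMap.homothety 0 (1 / 2 : ℝ))

theorem psiMap_apply (b : Bool) (p : ℝ × ℝ) :
    psiMap b p = (p.1 / 3 + if b then 2 / 3 else 0, p.2 / 2) := by
  rw [psiMap, AffineMap.prodMap_apply]
  simp only [AffineMap.homothety_apply, vsub_eq_sub, vadd_eq_add, smul_eq_mul]
  refine Prod.ext ?_ ?_
  · dsimp only
    split_ifs <;> ring
  · dsimp only
    ring

theorem lipschitzWith_psiMap (b : Bool) : LipschitzWith 2⁻¹ (psiMap b) := by
  refine LipschitzWith.of_dist_le_mul fun p q => ?_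
  have hfst : |p.1 - q.1| ≤ dist p q := le_max_left _ _
  have hsnd : |p.2 - q.2| ≤ dist p q := le_max_right _ _
  rw [NNReal.coe_inv, NNReal.coe_ofNat, Prod.dist_eq]
  simp only [psiMap_apply, Real.dist_eq, add_sub_add_right_eq_sub, ← sub_div, abs_div,
    Nat.abs_ofNat]
  exact max_le (by linarith [abs_nonneg (p.1 - q.1)]) (by linarith)

theorem isEmbedding_psiMap (b : Bool) : IsEmbedding (psiMap b) := by
  have hinv : Function.LeftInverse
      (fun p : ℝ × ℝ => (3 * (p.1 - if b then 2 / 3 else 0), 2 * p.2)) (psiMap b) :=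
    fun p => by simp [psiMap_apply, mul_div_cancel₀]
  exact hinv.isEmbedding (by fun_prop) (lipschitzWith_psiMap b).continuous

theorem mapsTo_psiMap_Icc (b : Bool) : MapsTo (psiMap b) (Icc 0 1) (Icc 0 1) := by
  rintro p ⟨⟨hx₀, hy₀⟩, hx₁, hy₁⟩
  simp only [Prod.fst_zero, Prod.snd_zero, Prod.fst_one, Prod.snd_one] at hx₀ hy₀ hx₁ hy₁
  simp only [psiMap_apply, mem_Icc, Prod.le_def, Prod.fst_zero, Prod.snd_zero, Prod.fst_one,
    Prod.snd_one]
  split_ifs <;> refine ⟨⟨?_, ?_⟩, ?_, ?_⟩ <;> linarith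

theorem psiPt_nil : psiPt [] = (1 / 2, 1) := by
  simp [psiPt]

theorem psiPt_cons (b : Bool) (σ : List Bool) : psiPt (b :: σ) = psiMap b (psiPt σ) := by
  have hpow {x : ℝ} (hx : x ≠ 0) (k : ℤ) : x ^ (-(k + 1)) = x ^ (-k) / x := by
    rw [neg_add, zpow_add₀ hx, zpow_neg_one, div_eq_mul_inv]
  have htail : ∑ k ∈ Finset.range σ.length,
      (if (b :: σ).getD (k + 1) false then (3 : ℝ) ^ (-(((k + 1 : ℕ) : ℤ) + 1)) else 0) =
      (∑ k ∈ Finset.range σ.length,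
        if σ.getD k false then (3 : ℝ) ^ (-((k : ℤ) + 1)) else 0) / 3 := by
    simp only [List.getD_cons_succ, Nat.cast_succ, Finset.sum_div, ite_div, zero_div,
      hpow three_ne_zero]
  rw [psiMap_apply, psiPt, psiPt, List.length_cons, Finset.sum_range_succ', htail,
    List.getD_cons_zero, Nat.cast_succ, Nat.cast_zero, hpow three_ne_zero, hpow three_ne_zero,
    hpow two_ne_zero, neg_zero, zpow_zero]
  refine Prod.ext ?_ rfl
  dsimp only
  split_ifs <;> ring

theorem psiPt_singleton (b : Bool) :
    psiPt [b] = (1 / 2 + if b then 1 / 3 else -(1 / 3), 1 / 2) := by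
  cases b <;> norm_num [psiPt_cons, psiPt_nil, psiMap_apply]

theorem psiPt_mem_Icc (σ : List Bool) : psiPt σ ∈ Icc (0 : ℝ × ℝ) 1 := by
  induction σ with
  | nil => rw [psiPt_nil]; norm_num [Prod.le_def]
  | cons b σ ih => exact psiPt_cons b σ ▸ mapsTo_psiMap_Icc b ih

/-- The segment that joins the node `σ` to its parent. At the root, where `[].dropLast = []`, it is
the single point `psiPt []`. -/
noncomputable def psiEdge (σ : List Bool) : Set (ℝ × ℝ) :=
  segment ℝ (psiPt σ.dropLast) (psiPt σ)

theorem psiPt_mem_psiEdge (σ : List Bool) : psiPt σ ∈ psiEdge σ :=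
  right_mem_segment ..

theorem psiEdge_nil : psiEdge [] = {psiPt []} :=
  segment_same ..

theorem psiEdge_cons {σ : List Bool} (hσ : σ ≠ []) (b : Bool) :
    psiEdge (b :: σ) = psiMap b '' psiEdge σ := by
  rw [psiEdge, psiEdge, image_segment, List.dropLast_cons_of_ne_nil hσ, psiPt_cons, psiPt_cons]

theorem image_psiMap_psiEdge_subset (b : Bool) (σ : List Bool) :
    psiMap b '' psiEdge σ ⊆ psiEdge (b :: σ) := by
  rcases eq_or_ne σ [] with rfl | hσ
  · rw [psiEdge_nil, image_singleton, ← psiPt_cons, singleton_subset_iff]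
    exact psiPt_mem_psiEdge [b]
  · exact (psiEdge_cons hσ b).ge

theorem psiEdge_singleton (b : Bool) :
    psiEdge [b] = (fun t : ℝ => (1 / 2 + if b then t / 3 else -(t / 3), 1 - t / 2)) '' Icc 0 1 := by
  rw [psiEdge, List.dropLast_singleton, psiPt_nil, psiPt_singleton, segment_eq_image]
  refine image_congr fun t _ => Prod.ext ?_ ?_
  · simp only [Prod.smul_mk, smul_eq_mul, Prod.mk_add_mk]
    split_ifs <;> ring
  · simp only [Prod.smul_mk, smul_eq_mul, Prod.mk_add_mk]
    ring

theorem isCompact_psiEdge (σ : List Bool) : IsCompact (psiEdge σ) := by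
  rw [psiEdge, ← convexHull_pair]
  exact (toFinite _).isCompact_convexHull ℝ

theorem psiEdge_subset_Icc (σ : List Bool) : psiEdge σ ⊆ Icc 0 1 :=
  (convex_Icc (𝕜 := ℝ) 0 1).segment_subset (psiPt_mem_Icc _) (psiPt_mem_Icc _)

theorem injOn_snd_psiEdge_singleton (b : Bool) : InjOn Prod.snd (psiEdge [b]) := by
  rw [psiEdge_singleton]
  rintro _ ⟨s, -, rfl⟩ _ ⟨t, -, rfl⟩ hst
  obtain rfl : s = t := by simpa using hst
  rfl

/-- The union of the edges of `T`. -/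
noncomputable def psiSkeleton (T : Set (List Bool)) : Set (ℝ × ℝ) :=
  ⋃ σ ∈ T, psiEdge σ

theorem psiSet_eq_closure (T : Set (List Bool)) : PsiSet T = closure (psiSkeleton T) := by
  refine congrArg closure (Subset.antisymm ?_ ?_)
  · refine union_subset ?_ ?_
    · exact image_subset_iff.2 fun σ hσ => mem_biUnion hσ (psiPt_mem_psiEdge σ)
    · exact iUnion₂_mono fun σ _ => iUnion_subset fun _ => Subset.rfl
  · refine iUnion₂_subset fun σ hσ => ?_
    rcases eq_or_ne σ [] with rfl | hne
    · rw [psiEdge_nil, singleton_subset_iff]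
      exact Or.inl (mem_image_of_mem psiPt hσ)
    · exact fun z hz => Or.inr (mem_iUnion₂.2 ⟨σ, hσ, mem_iUnion.2 ⟨hne, hz⟩⟩)

theorem psiSkeleton_subset_Icc (T : Set (List Bool)) : psiSkeleton T ⊆ Icc 0 1 :=
  iUnion₂_subset fun σ _ => psiEdge_subset_Icc σ

theorem psiSet_subset_Icc (T : Set (List Bool)) : PsiSet T ⊆ Icc 0 1 :=
  psiSet_eq_closure T ▸ closure_minimal (psiSkeleton_subset_Icc T) isClosed_Icc

theorem isCompact_psiSet (T : Set (List Bool)) : IsCompact (PsiSet T) :=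
  isCompact_Icc.of_isClosed_subset isClosed_closure (psiSet_subset_Icc T)

theorem psiSet_mono {T' : Set (List Bool)} (h : T ⊆ T') : PsiSet T ⊆ PsiSet T' := by
  rw [psiSet_eq_closure, psiSet_eq_closure]
  exact closure_mono (biUnion_subset_biUnion_left h)

theorem ediam_Icc_zero_one_le : ediam (Icc (0 : ℝ × ℝ) 1) ≤ 1 := by
  refine ediam_le fun x hx y hy => ?_
  have h1 := Real.ediam_Icc 0 1
  rw [sub_zero, ENNReal.ofReal_one] at h1
  rw [← h1]
  exact max_le (edist_le_ediam_of_mem ⟨hx.1.1, hx.2.1⟩ ⟨hy.1.1, hy.2.1⟩)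
    (edist_le_ediam_of_mem ⟨hx.1.2, hx.2.2⟩ ⟨hy.1.2, hy.2.2⟩)

theorem joinedIn_psiSkeleton (hT : IsTreeOfStrings T) {σ : List Bool} (hσ : σ ∈ T)
    (hz : z ∈ psiEdge σ) : JoinedIn (psiSkeleton T) (psiPt []) z := by
  induction σ using List.reverseRecOn generalizing z with
  | nil =>
    obtain rfl : z = psiPt [] := by rwa [psiEdge_nil, mem_singleton_iff] at hz
    exact .refl (mem_biUnion hσ hz)
  | append_singleton τ b ih =>
    refine (ih (hT _ hσ τ (List.prefix_append τ [b])) (psiPt_mem_psiEdge τ)).trans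
      (.of_segment_subset ?_)
    have hleft : psiPt τ ∈ psiEdge (τ ++ [b]) := by
      simpa [psiEdge] using left_mem_segment ℝ (psiPt τ) (psiPt (τ ++ [b]))
    exact ((convex_segment _ _).segment_subset hleft hz).trans
      (subset_biUnion_of_mem (u := psiEdge) hσ)

theorem isPathConnected_psiSkeleton (hT : IsTreeOfStrings T) (hne : T.Nonempty) :
    IsPathConnected (psiSkeleton T) := by
  refine ⟨psiPt [], mem_biUnion (hT.nil_mem hne) (psiPt_mem_psiEdge []), fun z hz => ?_⟩
  obtain ⟨σ, hσ, hz⟩ := mem_iUnion₂.1 hz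
  exact joinedIn_psiSkeleton hT hσ hz

theorem isPreconnected_psiSkeleton (hT : IsTreeOfStrings T) : IsPreconnected (psiSkeleton T) := by
  rcases T.eq_empty_or_nonempty with rfl | hne
  · rw [psiSkeleton, biUnion_empty]
    exact isPreconnected_empty
  · exact (isPathConnected_psiSkeleton hT hne).isConnected.isPreconnected

theorem isContinuum_psiSet (hT : IsTreeOfStrings T) (hne : T.Nonempty) :
    IsContinuum (PsiSet T) :=
  ⟨isCompact_psiSet T,
    psiSet_eq_closure T ▸ (isPathConnected_psiSkeleton hT hne).isConnected.closure⟩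

theorem psiSkeleton_eq (T : Set (List Bool)) :
    psiSkeleton T = (⋃ (_ : [] ∈ T), psiEdge []) ∪
      ⋃ b, ((⋃ (_ : [b] ∈ T), psiEdge [b]) ∪ psiMap b '' psiSkeleton (subtreeAt b T)) := by
  simp only [psiSkeleton, image_iUnion₂]
  refine Subset.antisymm (iUnion₂_subset fun σ hσ => ?_) ?_
  · match σ with
    | [] => exact fun z hz => Or.inl (mem_iUnion.2 ⟨hσ, hz⟩)
    | [b] => exact fun z hz => Or.inr (mem_iUnion.2 ⟨b, Or.inl (mem_iUnion.2 ⟨hσ, hz⟩)⟩)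
    | b :: c :: τ =>
      rw [psiEdge_cons (List.cons_ne_nil c τ)]
      exact fun z hz => Or.inr (mem_iUnion.2 ⟨b, Or.inr (mem_iUnion₂.2 ⟨c :: τ, hσ, hz⟩)⟩)
  · refine union_subset (iUnion_subset fun h => subset_biUnion_of_mem h) (iUnion_subset fun b =>
      union_subset (iUnion_subset fun h => subset_biUnion_of_mem h) (iUnion₂_subset fun τ hτ => ?_))
    exact (image_psiMap_psiEdge_subset b τ).trans (subset_biUnion_of_mem (u := psiEdge) hτ)

theorem hasFiniteConnectedCover_psiEdge (σ : List Bool) {ε : ℝ≥0∞} (hε : 0 < ε) :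
    HasFiniteConnectedCover ε (psiEdge σ) :=
  hasFiniteConnectedCover_of_convex (convex_segment _ _) (isCompact_psiEdge σ).totallyBounded hε

theorem hasFiniteConnectedCover_psiSkeleton (hT : IsTreeOfStrings T) (n : ℕ) :
    HasFiniteConnectedCover (2⁻¹ ^ n) (psiSkeleton T) := by
  induction n generalizing T with
  | zero =>
    rw [pow_zero]
    exact .of_isPreconnected (isPreconnected_psiSkeleton hT)
      ((ediam_mono (psiSkeleton_subset_Icc T)).trans ediam_Icc_zero_one_le)
  | succ n ih =>
    have hpos : (0 : ℝ≥0∞) < 2⁻¹ ^ (n + 1) := ENNReal.pow_pos (by simp) _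
    have hsubtree (b : Bool) :
        HasFiniteConnectedCover (2⁻¹ ^ (n + 1)) (psiMap b '' psiSkeleton (subtreeAt b T)) := by
      simpa [pow_succ'] using (ih (hT.subtreeAt b)).image_lipschitz (lipschitzWith_psiMap b)
    rw [psiSkeleton_eq]
    exact .union (.iUnion fun _ => hasFiniteConnectedCover_psiEdge [] hpos)
      (.iUnion fun b => .union (.iUnion fun _ => hasFiniteConnectedCover_psiEdge [b] hpos)
        (hsubtree b))

theorem locallyConnectedSpace_psiSet (hT : IsTreeOfStrings T) :
    LocallyConnectedSpace (PsiSet T) := by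
  refine locallyConnectedSpace_of_hasFiniteConnectedCover_univ fun ε hε => ?_
  obtain ⟨n, hn⟩ := ENNReal.exists_inv_two_pow_lt hε.ne'
  rw [psiSet_eq_closure]
  exact ((hasFiniteConnectedCover_psiSkeleton hT n).mono hn.le).closure.univ_subtype

/-- The part of the embedded full binary tree over the strings that start with `b`, together with
the edge that joins it to the root. -/
noncomputable def psiBranch (b : Bool) : Set (ℝ × ℝ) :=
  psiEdge [b] ∪ psiMap b '' PsiSet univ

theorem isClosed_psiBranch (b : Bool) : IsClosed (psiBranch b) :=
  ((isCompact_psiEdge [b]).union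
    ((isCompact_psiSet univ).image (lipschitzWith_psiMap b).continuous)).isClosed

theorem psiSet_univ_subset_iUnion_psiBranch : PsiSet univ ⊆ ⋃ b, psiBranch b := by
  rw [psiSet_eq_closure]
  refine closure_minimal ?_ (isClosed_iUnion_of_finite isClosed_psiBranch)
  rw [psiSkeleton_eq]
  refine union_subset (iUnion_subset fun _ => ?_) (iUnion_mono fun b =>
    union_subset_union (iUnion_subset fun _ => Subset.rfl) (image_mono ?_))
  · rw [psiEdge_nil, singleton_subset_iff]
    exact mem_iUnion.2 ⟨false, Or.inl (left_mem_segment ..)⟩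
  · rw [psiSet_eq_closure]
    exact subset_closure

theorem half_lt_fst_iff_of_mem_psiBranch (hz : z ∈ psiBranch b) (hne : z ≠ psiPt []) :
    1 / 2 < z.1 ↔ b = true := by
  rcases hz with hz | ⟨p, hp, rfl⟩
  · rw [psiEdge_singleton] at hz
    obtain ⟨t, ⟨ht, -⟩, rfl⟩ := hz
    have hpos : 0 < t := by
      refine ht.lt_of_ne ?_
      rintro rfl
      exact hne (by simp [psiPt_nil])
    cases b <;> simp only [Bool.false_eq_true, ↓reduceIte, iff_false, iff_true, not_lt] <;> linarith
  · obtain ⟨⟨h₀, -⟩, h₁, -⟩ := psiSet_subset_Icc univ hp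
    rw [Prod.fst_zero] at h₀
    rw [Prod.fst_one] at h₁
    rw [psiMap_apply]
    cases b <;> simp only [Bool.false_eq_true, ↓reduceIte, iff_false, iff_true, not_lt] <;> linarith

theorem subsingleton_psiBranch_inter : (psiBranch false ∩ psiBranch true).Subsingleton := by
  refine (subsingleton_singleton (a := psiPt [])).anti fun z ⟨hfalse, htrue⟩ => ?_
  by_contra hne
  exact Bool.false_ne_true ((half_lt_fst_iff_of_mem_psiBranch hfalse hne).1
    ((half_lt_fst_iff_of_mem_psiBranch htrue hne).2 rfl))

theorem subsingleton_psiEdge_inter_image_psiMap (b : Bool) :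
    (psiEdge [b] ∩ psiMap b '' PsiSet univ).Subsingleton := by
  have hsnd : ∀ z ∈ psiEdge [b] ∩ psiMap b '' PsiSet univ, z.2 = 1 / 2 := by
    rintro _ ⟨hz, p, hp, rfl⟩
    have hp₁ : p.2 ≤ 1 := (psiSet_subset_Icc univ hp).2.2
    rw [psiEdge_singleton] at hz
    obtain ⟨t, ⟨-, ht⟩, heq⟩ := hz
    rw [psiMap_apply] at heq ⊢
    have hheight : 1 - t / 2 = p.2 / 2 := congrArg Prod.snd heq
    dsimp only
    linarith
  exact fun z hz w hw =>
    injOn_snd_psiEdge_singleton b hz.1 hw.1 ((hsnd z hz).trans (hsnd w hw).symm)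

theorem HasNoCutPoint.ediam_le_of_subset_psiSet {S : Set (ℝ × ℝ)} (hS : HasNoCutPoint S)
    (hsub : S ⊆ PsiSet univ) (n : ℕ) : ediam S ≤ 2⁻¹ ^ n := by
  induction n generalizing S with
  | zero =>
    rw [pow_zero]
    exact (ediam_mono (hsub.trans (psiSet_subset_Icc univ))).trans ediam_Icc_zero_one_le
  | succ n ih =>
    obtain ⟨b, hb⟩ : ∃ b, S ⊆ psiBranch b :=
      Bool.exists_bool.2 (hS.subset_or_subset (isClosed_psiBranch false) (isClosed_psiBranch true)
        (subsingleton_psiBranch_inter.anti inter_subset_right) fun z hz =>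
          Bool.exists_bool.1 (mem_iUnion.1 (psiSet_univ_subset_iUnion_psiBranch (hsub hz))))
    rcases hS.subset_or_subset (isCompact_psiEdge [b]).isClosed
      ((isCompact_psiSet univ).image (lipschitzWith_psiMap b).continuous).isClosed
      ((subsingleton_psiEdge_inter_image_psiMap b).anti inter_subset_right) hb with hedge | himage
    · have hsingle : S.Subsingleton :=
        hS.subsingleton_of_injOn continuous_snd ((injOn_snd_psiEdge_singleton b).mono hedge)
      exact (ediam_subsingleton hsingle).trans_le zero_le
    · obtain ⟨S', hS', rfl⟩ := subset_image_iff.1 himage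
      rw [hasNoCutPoint_image_iff (isEmbedding_psiMap b)] at hS
      calc ediam (psiMap b '' S') ≤ (2⁻¹ : ℝ≥0) * ediam S' :=
            (lipschitzWith_psiMap b).ediam_image_le S'
        _ ≤ (2⁻¹ : ℝ≥0) * 2⁻¹ ^ n := by gcongr; exact ih hS hS'
        _ = 2⁻¹ ^ (n + 1) := by simp [pow_succ']

theorem HasNoCutPoint.subsingleton_of_subset_psiSet {S : Set (ℝ × ℝ)} (hS : HasNoCutPoint S)
    (hsub : S ⊆ PsiSet T) : S.Subsingleton := by
  rw [← ediam_eq_zero_iff]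
  by_contra hpos
  obtain ⟨n, hn⟩ := ENNReal.exists_inv_two_pow_lt hpos
  exact hn.not_ge (hS.ediam_le_of_subset_psiSet (hsub.trans (psiSet_mono (subset_univ T))) n)

end Embedding

theorem psiSet_isDendrite (T : Set (List Bool)) (hT : IsTreeOfStrings T)
    (hne : T.Nonempty) : IsDendrite (PsiSet T) := by
  refine ⟨isContinuum_psiSet hT hne, locallyConnectedSpace_psiSet hT, fun S hS => ?_⟩
  have hrank : 1 < Module.rank ℝ (EuclideanSpace ℝ (Fin 2)) := by
    simp [← Module.finrank_eq_rank]
  exact isEmpty_homeomorph_sphere_of_subsingleton hrank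
    fun hcut => hcut.subsingleton_of_subset_psiSet hS
end
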